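/- arXiv:math/0411393 — 2 statements merged into one kernel-verified Lean document; each statement's English description precedes it below -/
import Mathlib

section
/- Let n ≥ 1 and let c_1, …, c_n ∈ ℂ. For 1 ≤ i ≤ n define f_i ∈ ℂ[x_1,…,x_n] by f_i = ∑_{k=0}^{n−i+1} 𝔖^{(n)}_{k,i−1} − c_i·x_1⋯x_n. Then there exists a univariate polynomial P ∈ ℂ[X] whose degree is exactly 2n and which is palindromic (i.e., the coefficient of X^k in P equals the coefficient of X^{2n−k} for all 0 ≤ k ≤ 2n), such that the multivariate polynomial x_1⋯x_{n−1} · P(x_n) belongs to the ideal of ℂ[x_1,…,x_n] generated by f_1, …, f_n. -/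
/-!
Put `uᵢ = 1 + xᵢ²`. The generating function of the sums `∑ₖ 𝔖ₖⱼ` is
`∑ⱼ gⱼ Tʲ = ∏ᵢ (uᵢ + xᵢ T)`, so the generators of the ideal are `gⱼ - cⱼ x₁⋯xₙ` for `0 ≤ j < n`.

Write `x = xₙ`, `u = uₙ`, `p = x₁⋯xₙ₋₁`, and let `hⱼ` be the coefficients of the product over
`i < n`, so that `gⱼ = u hⱼ + x hⱼ₋₁` and `hₙ₋₁ = p`. Evaluating at `T = -u/x` and clearing
denominators gives the telescoping identity `∑_{j<n} (-u)ʲ xⁿ⁻¹⁻ʲ gⱼ = -(-u)ⁿ p`. Therefore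
`∑_{j<n} (-u)ʲ xⁿ⁻¹⁻ʲ (gⱼ - cⱼ x p) = -p · P(x)` with
`P = (-(X² + 1))ⁿ + ∑_{j<n} cⱼ (-(X² + 1))ʲ Xⁿ⁻ʲ`. Each summand of `P` is palindromic with respect
to degree `2n`, and only the first has a nonzero constant term, hence also the only nonzero
coefficient in degree `2n`.
-/

open MvPolynomial

/-- `𝔖⁽ⁿ⁾ₖⱼ ∈ ℂ[x₁,…,xₙ]` (variables indexed by `Fin n`): the sum over ordered pairs
`(A, B)` of disjoint subsets of `{1,…,n}` with `|A| = k`, `|B| = j` of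
`(∏_{i∈A} xᵢ²)(∏_{i∈B} xᵢ)`; it is `0` when `k + j > n`. -/
noncomputable def frakS (n k j : ℕ) : MvPolynomial (Fin n) ℂ :=
  ∑ p ∈ Finset.univ.filter
      (fun p : Finset (Fin n) × Finset (Fin n) =>
        p.1 ∩ p.2 = ∅ ∧ p.1.card = k ∧ p.2.card = j),
    (∏ i ∈ p.1, X i ^ 2) * ∏ i ∈ p.2, X i

/-- `∑ₖ 𝔖ₖⱼ` is the coefficient of `Tʲ` in `∏ᵢ (xᵢ T + (xᵢ² + 1))`. -/
lemma sum_frakS_eq_coeff (n j : ℕ) :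
    ∑ k ∈ Finset.range (n - j + 1), frakS n k j =
      (∏ i : Fin n, (Polynomial.C (X i : MvPolynomial (Fin n) ℂ) * Polynomial.X +
        Polynomial.C (X i ^ 2 + 1))).coeff j := by
  classical
  have h1 : ∑ k ∈ Finset.range (n - j + 1), frakS n k j =
      ∑ p ∈ Finset.univ.filter (fun p : Finset (Fin n) × Finset (Fin n) =>
        p.1 ∩ p.2 = ∅ ∧ p.2.card = j), (∏ i ∈ p.1, X i ^ 2) * ∏ i ∈ p.2, X i := by
    rw [← Finset.sum_fiberwise_of_maps_to (t := Finset.range (n - j + 1))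
      (g := fun p : Finset (Fin n) × Finset (Fin n) => p.1.card)]
    · refine Finset.sum_congr rfl fun k _ => ?_
      unfold frakS
      rw [Finset.filter_filter]
      refine Finset.sum_congr ?_ fun _ _ => rfl
      ext p
      simp only [Finset.mem_filter, Finset.mem_univ, true_and]
      tauto
    · rintro ⟨A, B⟩ h
      simp only [Finset.mem_filter, Finset.mem_univ, true_and] at h
      have h2 := Finset.card_le_univ (A ∪ B)
      rw [Finset.card_union_of_disjoint (Finset.disjoint_iff_inter_eq_empty.2 h.1),
        Fintype.card_fin] at h2
      simp only [Finset.mem_range]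
      omega
  rw [h1, Finset.prod_add, Polynomial.finsetSum_coeff, Finset.sum_filter,
    ← Finset.univ_product_univ, Finset.sum_product_right, Finset.powerset_univ]
  refine Finset.sum_congr rfl fun B _ => ?_
  rw [Finset.prod_mul_distrib, Finset.prod_const, ← map_prod, ← map_prod, Polynomial.coeff_mul_C,
    Polynomial.coeff_C_mul_X_pow, Finset.prod_add_one]
  by_cases hj : B.card = j
  · simp only [hj, and_true, if_true]
    rw [← Finset.sum_filter, Finset.mul_sum]
    refine Finset.sum_congr ?_ fun A _ => mul_comm _ _
    ext A
    simp [← Finset.disjoint_iff_inter_eq_empty, Finset.subset_sdiff]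
  · simp [hj, Ne.symm hj]

/-- The telescoping identity obtained from evaluating `h · (x T + u)` at its root `T = -u/x` and
clearing denominators. -/
lemma telescope {R : Type*} [CommRing R] (h : Polynomial R) (x u : R) (N : ℕ) :
    ∑ j ∈ Finset.range (N + 1), (-u) ^ j * x ^ (N - j) *
      (h * (Polynomial.C x * Polynomial.X + Polynomial.C u)).coeff j =
      -((-u) ^ (N + 1) * h.coeff N) := by
  have hm : h * (Polynomial.C x * Polynomial.X + Polynomial.C u) =
      Polynomial.C x * (h * Polynomial.X) + Polynomial.C u * h := by ring
  simp only [hm, Polynomial.coeff_add, Polynomial.coeff_C_mul]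
  induction N with
  | zero => simp
  | succ N ih =>
    rw [Finset.sum_range_succ]
    have h2 : ∀ j ∈ Finset.range (N + 1), (-u) ^ j * x ^ (N + 1 - j) *
        (x * (h * Polynomial.X).coeff j + u * h.coeff j) =
        x * ((-u) ^ j * x ^ (N - j) *
          (x * (h * Polynomial.X).coeff j + u * h.coeff j)) := by
      intro j hj
      have hj' : j ≤ N := by simpa [Nat.lt_succ_iff] using hj
      rw [Nat.succ_sub hj', pow_succ]
      ring
    rw [Finset.sum_congr rfl h2, ← Finset.mul_sum, ih, Polynomial.coeff_mul_X]
    simp only [Nat.sub_self]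
    ring

lemma natDegree_neg_sq_add_one_pow_le (j : ℕ) :
    ((-(Polynomial.X ^ 2 + 1) : Polynomial ℂ) ^ j).natDegree ≤ 2 * j := by
  refine Polynomial.natDegree_pow_le_of_le j (m := 2) ?_ |>.trans (by omega)
  compute_degree

lemma reflect_neg_sq_add_one_pow (j : ℕ) :
    Polynomial.reflect (2 * j) ((-(Polynomial.X ^ 2 + 1) : Polynomial ℂ) ^ j) =
      (-(Polynomial.X ^ 2 + 1)) ^ j := by
  induction j with
  | zero => simp [Polynomial.reflect_one]
  | succ j ih =>
    rw [pow_succ, mul_add, Polynomial.reflect_mul _ _ (natDegree_neg_sq_add_one_pow_le j)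
      (by compute_degree), ih]
    congr 1
    rw [Polynomial.reflect_neg, Polynomial.reflect_add, Polynomial.reflect_one,
      Polynomial.reflect_monomial]
    simp [Polynomial.revAt_le, add_comm]

lemma natDegree_term_le {n j : ℕ} (hj : j ≤ n) :
    ((-(Polynomial.X ^ 2 + 1) : Polynomial ℂ) ^ j * Polynomial.X ^ (n - j)).natDegree ≤ 2 * n := by
  refine (Polynomial.natDegree_mul_le_of_le (natDegree_neg_sq_add_one_pow_le j)
    (Polynomial.natDegree_X_pow_le (n - j))).trans ?_
  omega

/-- `(-(X² + 1))ʲ Xⁿ⁻ʲ` is palindromic with respect to degree `2n`. -/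
lemma reflect_term {n j : ℕ} (hj : j ≤ n) :
    Polynomial.reflect (2 * n)
        ((-(Polynomial.X ^ 2 + 1) : Polynomial ℂ) ^ j * Polynomial.X ^ (n - j)) =
      (-(Polynomial.X ^ 2 + 1)) ^ j * Polynomial.X ^ (n - j) := by
  have h : 2 * n = 2 * j + 2 * (n - j) := by omega
  rw [h, Polynomial.reflect_mul _ _ (natDegree_neg_sq_add_one_pow_le j)
    ((Polynomial.natDegree_X_pow_le _).trans (by omega)), reflect_neg_sq_add_one_pow,
    Polynomial.reflect_monomial, Polynomial.revAt_le (by omega)]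
  congr 2
  omega

/-- given `c₁, …, cₙ ∈ ℂ` and the polynomials
`fᵢ = ∑_{k=0}^{n−i+1} 𝔖⁽ⁿ⁾ₖ,ᵢ₋₁ − cᵢ·x₁⋯xₙ` (for `1 ≤ i ≤ n`, here indexed by
`i : Fin n` standing for `i+1`), there is a palindromic univariate polynomial `P`
of degree exactly `2n` with `x₁⋯xₙ₋₁·P(xₙ)` in the ideal generated by `f₁, …, fₙ`. -/
theorem exists_palindromic_in_ideal (n : ℕ) (hn : 1 ≤ n) (c : Fin n → ℂ) :
    ∃ P : Polynomial ℂ, P.degree = (2 * n : ℕ) ∧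
      (∀ k ≤ 2 * n, P.coeff k = P.coeff (2 * n - k)) ∧
      (∏ i ∈ Finset.univ.filter (fun i : Fin n => (i : ℕ) < n - 1), X i) *
          Polynomial.aeval (X (⟨n - 1, by omega⟩ : Fin n) : MvPolynomial (Fin n) ℂ) P ∈
        Ideal.span (Set.range fun i : Fin n =>
          (∑ k ∈ Finset.range (n - (i : ℕ) + 1), frakS n k (i : ℕ)) -
            C (c i) * ∏ t : Fin n, X t) := by
  classical
  obtain ⟨m, rfl⟩ : ∃ m, n = m + 1 := ⟨n - 1, by omega⟩
  set P : Polynomial ℂ := (-(Polynomial.X ^ 2 + 1)) ^ (m + 1) + ∑ i : Fin (m + 1),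
    Polynomial.C (c i) *
      ((-(Polynomial.X ^ 2 + 1)) ^ (i : ℕ) * Polynomial.X ^ (m + 1 - (i : ℕ))) with hP
  have hrefl : Polynomial.reflect (2 * (m + 1)) P = P := by
    have hs : ∀ s : Finset (Fin (m + 1)), Polynomial.reflect (2 * (m + 1)) (∑ i ∈ s,
        Polynomial.C (c i) *
          ((-(Polynomial.X ^ 2 + 1)) ^ (i : ℕ) * Polynomial.X ^ (m + 1 - (i : ℕ)))) =
        ∑ i ∈ s, Polynomial.C (c i) *
          ((-(Polynomial.X ^ 2 + 1)) ^ (i : ℕ) * Polynomial.X ^ (m + 1 - (i : ℕ))) := by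
      intro s
      induction s using Finset.induction_on with
      | empty => simp
      | insert a s ha ih =>
        rw [Finset.sum_insert ha, Polynomial.reflect_add, ih, Polynomial.reflect_C_mul,
          reflect_term (by omega)]
    rw [hP, Polynomial.reflect_add, hs, reflect_neg_sq_add_one_pow]
  have hpal : ∀ k ≤ 2 * (m + 1), P.coeff k = P.coeff (2 * (m + 1) - k) := by
    intro k hk
    conv_lhs => rw [← hrefl]
    rw [Polynomial.coeff_reflect, Polynomial.revAt_le hk]
  have hdeg : P.natDegree ≤ 2 * (m + 1) := by
    refine Polynomial.natDegree_add_le_of_degree_le (natDegree_neg_sq_add_one_pow_le _)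
      (Polynomial.natDegree_sum_le_of_forall_le _ _ fun i _ => ?_)
    exact (Polynomial.natDegree_C_mul_le _ _).trans (natDegree_term_le (by omega))
  -- By palindromicity the coefficient in degree `2n` is the constant term `(-1)ⁿ`.
  have h0 : P.coeff (2 * (m + 1)) ≠ 0 := by
    rw [hpal _ le_rfl, Nat.sub_self, Polynomial.coeff_zero_eq_eval_zero, hP,
      Polynomial.eval_add, Polynomial.eval_finsetSum, Finset.sum_eq_zero]
    · simp
    · intro i _
      have : m + 1 - (i : ℕ) ≠ 0 := by omega
      simp [this]
  refine ⟨P, Polynomial.degree_eq_of_le_of_coeff_ne_zero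
    (Polynomial.natDegree_le_iff_degree_le.1 hdeg) h0, hpal, ?_⟩
  have hlast : (⟨m + 1 - 1, by omega⟩ : Fin (m + 1)) = Fin.last m := rfl
  have hp : ∏ i ∈ Finset.univ.filter (fun i : Fin (m + 1) => (i : ℕ) < m + 1 - 1),
      (X i : MvPolynomial (Fin (m + 1)) ℂ) = ∏ i : Fin m, X i.castSucc := by
    rw [Finset.prod_filter, Fin.prod_univ_castSucc]
    simp
  rw [hlast, hp]
  set p : MvPolynomial (Fin (m + 1)) ℂ := ∏ i : Fin m, X i.castSucc with hpdef
  set x : MvPolynomial (Fin (m + 1)) ℂ := X (Fin.last m) with hx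
  set h : Polynomial (MvPolynomial (Fin (m + 1)) ℂ) := ∏ i : Fin m,
    (Polynomial.C (X i.castSucc) * Polynomial.X + Polynomial.C (X i.castSucc ^ 2 + 1)) with hh
  have hcoeff : h.coeff m = p := by
    have := Polynomial.coeff_prod_of_natDegree_le Finset.univ (fun i : Fin m =>
      Polynomial.C (X i.castSucc : MvPolynomial (Fin (m + 1)) ℂ) * Polynomial.X +
        Polynomial.C (X i.castSucc ^ 2 + 1)) 1 (fun i _ => by
          exact Polynomial.natDegree_linear_le)
    rw [Finset.card_univ, Fintype.card_fin, mul_one] at this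
    rw [hh, this, hpdef]
    refine Finset.prod_congr rfl fun i _ => ?_
    rw [Polynomial.coeff_add, Polynomial.coeff_C_mul, Polynomial.coeff_X_one,
      Polynomial.coeff_C_of_ne_zero one_ne_zero, mul_one, add_zero]
  have htel := telescope h x (x ^ 2 + 1) m
  rw [hcoeff, Finset.sum_range] at htel
  have key : p * Polynomial.aeval x P = -∑ i : Fin (m + 1),
      ((-(x ^ 2 + 1)) ^ (i : ℕ) * x ^ (m - (i : ℕ))) *
        ((∑ k ∈ Finset.range (m + 1 - (i : ℕ) + 1), frakS (m + 1) k (i : ℕ)) -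
            C (c i) * ∏ t : Fin (m + 1), X t) := by
    simp only [sum_frakS_eq_coeff, Fin.prod_univ_castSucc, ← hh, ← hpdef, ← hx, mul_sub,
      Finset.sum_sub_distrib, htel]
    rw [hP, map_add, map_sum, mul_add, Finset.mul_sum, neg_sub, sub_neg_eq_add,
      add_comm (p * _)]
    refine congrArg₂ (· + ·) (Finset.sum_congr rfl fun i _ => ?_) ?_
    · have hi : m + 1 - (i : ℕ) = m - (i : ℕ) + 1 := by omega
      simp only [hi, map_mul, map_pow, map_neg, map_add, map_one, Polynomial.aeval_X,
        Polynomial.aeval_C, MvPolynomial.algebraMap_eq]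
      ring
    · simp only [map_pow, map_neg, map_add, map_one, Polynomial.aeval_X]
      ring
  rw [key]
  exact neg_mem (Ideal.sum_mem _ fun i _ =>
    Ideal.mul_mem_left _ _ (Ideal.subset_span ⟨i, rfl⟩))
end

section
/- Let n ≥ 1 and let c_1, …, c_n ∈ ℂ. For 1 ≤ i ≤ n define f_i ∈ ℂ[x_1,…,x_n] by f_i = ∑_{k=0}^{n−i+1} 𝔖^{(n)}_{k,i−1} − c_i·x_1⋯x_n. Then there exists a univariate polynomial P ∈ ℂ[X] of degree exactly 2n which is palindromic (coefficient of X^k equals coefficient of X^{2n−k} for 0 ≤ k ≤ 2n), such that every point (x_1, …, x_n) ∈ ℂⁿ with x_i ≠ 0 for all i and f_1(x) = f_2(x) = ⋯ = f_n(x) = 0 satisfies P(x_n) = 0. -/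
/-!
Let `Fⱼ = ∑ₖ 𝔖ₖⱼ`. Expanding `∏ᵢ (xᵢ² + (y xᵢ + 1))` over pairs of disjoint subsets shows that
this product is the generating function `∑ⱼ yʲ Fⱼ` (`sum_pow_mul_eval_frakS`). On a common zero with nonzero
coordinates, `Fⱼ = cⱼ₊₁ ∏ xᵢ` for `j < n`, while `Fₙ = ∏ xᵢ` always. At `y = -(t + 1/t)` with
`t` the last coordinate, the factor of index `n` vanishes, so `y` is a root of the monic polynomial
`q(y) = yⁿ + ∑ cⱼ₊₁ yʲ`, which depends only on `c`. Clearing denominators,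
`P(X) = Xⁿ q(-(X + 1/X))` vanishes at `t`. It is a combination of the terms `(X² + 1)ʲ Xⁿ⁻ʲ`, each
palindromic with respect to the degree `2n` (`IsPal`), and only `j = n` contributes to the
coefficient of `X²ⁿ`.
-/

open MvPolynomial

/-- The polynomial `p` has degree at most `N` and its coefficients, indexed by `0, …, N`, form a
palindrome. The degree bound is what makes the notion multiplicative. -/
def IsPal (N : ℕ) (p : Polynomial ℂ) : Prop :=
  p.natDegree ≤ N ∧ p.reflect N = p

lemma IsPal.mul {M N : ℕ} {p q : Polynomial ℂ} (hp : IsPal M p) (hq : IsPal N q) :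
    IsPal (M + N) (p * q) :=
  ⟨Polynomial.natDegree_mul_le_of_le hp.1 hq.1, by
    rw [Polynomial.reflect_mul p q hp.1 hq.1, hp.2, hq.2]⟩

lemma isPal_C (a : ℂ) : IsPal 0 (Polynomial.C a) :=
  ⟨by simp, by simp [Polynomial.reflect_C]⟩

lemma isPal_X_pow (m : ℕ) : IsPal (2 * m) (Polynomial.X ^ m) := by
  refine ⟨by simp; omega, ?_⟩
  rw [← one_mul (Polynomial.X ^ m), ← Polynomial.C_1, Polynomial.reflect_C_mul_X_pow,
    Polynomial.revAt_le (by omega)]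
  congr 2
  omega

lemma isPal_X_sq_add_one : IsPal 2 (Polynomial.X ^ 2 + 1) := by
  refine ⟨by compute_degree, ?_⟩
  rw [Polynomial.reflect_add, ← one_mul (Polynomial.X ^ 2), ← Polynomial.C_1,
    Polynomial.reflect_C_mul_X_pow, Polynomial.reflect_C, Polynomial.revAt_le le_rfl]
  simp [add_comm]

lemma IsPal.pow {N : ℕ} {p : Polynomial ℂ} (hp : IsPal N p) (j : ℕ) :
    IsPal (N * j) (p ^ j) := by
  induction j with
  | zero => simpa using isPal_C 1
  | succ j ih => rw [pow_succ, Nat.mul_succ]; exact ih.mul hp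

/-- The generating function of the inner sums of the `fᵢ`. -/
lemma sum_pow_mul_eval_frakS (n : ℕ) (x : Fin n → ℂ) (y : ℂ) :
    ∑ j ∈ Finset.range (n + 1),
        y ^ j * ∑ k ∈ Finset.range (n - j + 1), eval x (frakS n k j) =
      ∏ i, (x i ^ 2 + (y * x i + 1)) := by
  -- both sides are the sum of this weight over all pairs of disjoint subsets
  let w : Finset (Fin n) × Finset (Fin n) → ℂ :=
    fun p => (∏ i ∈ p.1, x i ^ 2) * ∏ i ∈ p.2, (y * x i)
  let D : Finset (Finset (Fin n) × Finset (Fin n)) :=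
    Finset.univ.filter fun p => p.1 ∩ p.2 = ∅
  have hcard : ∀ p ∈ D, p.1.card + p.2.card ≤ n := by
    intro p hp
    have h : p.1 ∩ p.2 = ∅ := by simpa [D] using hp
    rw [← Finset.card_union_of_disjoint (Finset.disjoint_iff_inter_eq_empty.mpr h)]
    simpa using Finset.card_le_univ (p.1 ∪ p.2)
  have hR : ∏ i, (x i ^ 2 + (y * x i + 1)) = ∑ p ∈ D, w p := by
    rw [Finset.prod_add]
    simp_rw [Finset.prod_add_one, Finset.mul_sum]
    rw [Finset.sum_sigma']
    refine Finset.sum_bij' (fun p _ => (p.1, p.2)) (fun p _ => ⟨p.1, p.2⟩) ?_ ?_ ?_ ?_ ?_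
    · rintro ⟨A, B⟩ h
      simp only [Finset.mem_sigma, Finset.mem_powerset, Finset.subset_univ, true_and] at h
      simp only [D, Finset.mem_filter, Finset.mem_univ, true_and]
      exact Finset.disjoint_iff_inter_eq_empty.mp
        (Finset.disjoint_of_subset_right h Finset.disjoint_sdiff)
    · rintro ⟨A, B⟩ h
      simp only [D, Finset.mem_filter, Finset.mem_univ, true_and] at h
      simp only [Finset.mem_sigma, Finset.mem_powerset, Finset.subset_univ, true_and]
      exact Finset.subset_sdiff.mpr
        ⟨Finset.subset_univ _, (Finset.disjoint_iff_inter_eq_empty.mpr h).symm⟩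
    · intros; rfl
    · intros; rfl
    · intros; rfl
  rw [hR, ← Finset.sum_fiberwise_of_maps_to (s := D) (t := Finset.range (n + 1))
    (g := fun p => p.2.card) (fun p hp => by have := hcard p hp; simp; omega)]
  refine Finset.sum_congr rfl fun j _ => ?_
  rw [← Finset.sum_fiberwise_of_maps_to (t := Finset.range (n - j + 1))
    (g := fun p : Finset (Fin n) × Finset (Fin n) => p.1.card) (fun p hp => by
      have := hcard p (Finset.mem_filter.mp hp).1
      have := (Finset.mem_filter.mp hp).2
      simp; omega), Finset.mul_sum]
  refine Finset.sum_congr rfl fun k _ => ?_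
  rw [frakS, map_sum, Finset.mul_sum]
  refine Finset.sum_congr ?_ fun p hp => ?_
  · ext p
    simp only [D, Finset.mem_filter, Finset.mem_univ, true_and]
    tauto
  · have hj : p.2.card = j := (Finset.mem_filter.mp (Finset.mem_filter.mp hp).1).2
    simp only [w, map_mul, map_prod, map_pow, eval_X, Finset.prod_mul_distrib,
      Finset.prod_const, hj]
    ring

lemma eval_frakS_zero_self (n : ℕ) (x : Fin n → ℂ) :
    eval x (frakS n 0 n) = ∏ i, x i := by
  have h : Finset.univ.filter (fun p : Finset (Fin n) × Finset (Fin n) =>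
      p.1 ∩ p.2 = ∅ ∧ p.1.card = 0 ∧ p.2.card = n) = {(∅, Finset.univ)} := by
    ext ⟨A, B⟩
    have hB : B.card = n ↔ B = Finset.univ := by
      rw [← Finset.card_eq_iff_eq_univ, Fintype.card_fin]
    simp only [Finset.mem_filter, Finset.mem_univ, true_and, Finset.mem_singleton,
      Prod.mk.injEq, Finset.card_eq_zero, hB]
    constructor
    · exact fun h => h.2
    · rintro ⟨rfl, rfl⟩
      simp
  rw [frakS, h]
  simp

/-- given `c₁, …, cₙ ∈ ℂ` and the polynomials
`fᵢ = ∑_{k=0}^{n−i+1} 𝔖⁽ⁿ⁾ₖ,ᵢ₋₁ − cᵢ·x₁⋯xₙ` (for `1 ≤ i ≤ n`, here indexed by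
`i : Fin n` standing for `i+1`), there is a palindromic univariate polynomial `P`
of degree exactly `2n` such that every common zero `x ∈ (ℂ^×)ⁿ` of `f₁, …, fₙ`
satisfies `P(xₙ) = 0`. -/
theorem exists_palindromic_vanishing_on_solutions (n : ℕ) (hn : 1 ≤ n)
    (c : Fin n → ℂ) :
    ∃ P : Polynomial ℂ, P.degree = (2 * n : ℕ) ∧
      (∀ k ≤ 2 * n, P.coeff k = P.coeff (2 * n - k)) ∧
      ∀ x : Fin n → ℂ, (∀ i, x i ≠ 0) →
        (∀ i : Fin n,
          MvPolynomial.eval x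
            ((∑ k ∈ Finset.range (n - (i : ℕ) + 1), frakS n k (i : ℕ)) -
              C (c i) * ∏ t : Fin n, X t) = 0) →
        Polynomial.eval (x (⟨n - 1, by omega⟩ : Fin n)) P = 0 := by
  -- the coefficients of the monic polynomial `q`
  let a : ℕ → ℂ := fun j => if h : j < n then c ⟨j, h⟩ else 1
  let T : ℕ → Polynomial ℂ := fun j =>
    Polynomial.C (a j * (-1) ^ j) * (Polynomial.X ^ 2 + 1) ^ j * Polynomial.X ^ (n - j)
  have hT : ∀ j ∈ Finset.range (n + 1), IsPal (2 * n) (T j) := by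
    intro j hj
    have hj' : j ≤ n := by simpa [Nat.lt_succ_iff] using hj
    have h := ((isPal_C (a j * (-1) ^ j)).mul (isPal_X_sq_add_one.pow j)).mul
      (isPal_X_pow (n - j))
    rwa [show 0 + 2 * j + 2 * (n - j) = 2 * n by omega] at h
  have hdeg : (∑ j ∈ Finset.range (n + 1), T j).natDegree ≤ 2 * n :=
    Polynomial.natDegree_sum_le_of_forall_le _ _ fun j hj => (hT j hj).1
  have hpal : ∀ k ≤ 2 * n, (∑ j ∈ Finset.range (n + 1), T j).coeff k =
      (∑ j ∈ Finset.range (n + 1), T j).coeff (2 * n - k) := by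
    intro k hk
    simp only [Polynomial.finsetSum_coeff]
    refine Finset.sum_congr rfl fun j hj => ?_
    conv_lhs => rw [← (hT j hj).2]
    rw [Polynomial.coeff_reflect, Polynomial.revAt_le hk]
  refine ⟨∑ j ∈ Finset.range (n + 1), T j, ?_, hpal, ?_⟩
  · refine Polynomial.degree_eq_of_le_of_coeff_ne_zero
      (Polynomial.natDegree_le_iff_degree_le.mp hdeg) ?_
    -- by palindromicity the top coefficient is the constant one, that is, the value at `0`
    rw [hpal _ le_rfl, Nat.sub_self, Polynomial.coeff_zero_eq_eval_zero,
      Polynomial.eval_finsetSum, Finset.sum_eq_single n]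
    · simp [T, a]
    · intro j hj hjn
      have : n - j ≠ 0 := by simp at hj; omega
      simp [T, this]
    · simp
  · intro x hx hf
    set m : Fin n := ⟨n - 1, by omega⟩
    have hprod : ∏ i, x i ≠ 0 := Finset.prod_ne_zero_iff.mpr fun i _ => hx i
    have hF : ∀ j ∈ Finset.range (n + 1),
        ∑ k ∈ Finset.range (n - j + 1), eval x (frakS n k j) = a j * ∏ i, x i := by
      intro j hj
      by_cases h : j < n
      · have := hf ⟨j, h⟩
        simp only [map_sub, map_sum, map_mul, eval_C, map_prod, eval_X, sub_eq_zero] at this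
        simpa [a, h] using this
      · obtain rfl : j = n := by simp at hj; omega
        simp [a, eval_frakS_zero_self]
    have hgen := sum_pow_mul_eval_frakS n x (-(x m ^ 2 + 1) / x m)
    rw [Finset.prod_eq_zero (Finset.mem_univ m) (by have := hx m; field_simp; ring),
      Finset.sum_congr rfl fun j hj => by rw [hF j hj, ← mul_assoc], ← Finset.sum_mul] at hgen
    have hq := (mul_eq_zero.mp hgen).resolve_right hprod
    rw [Polynomial.eval_finsetSum, ← mul_zero (x m ^ n), ← hq, Finset.mul_sum]
    refine Finset.sum_congr rfl fun j hj => ?_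
    have hj' : j ≤ n := by simpa [Nat.lt_succ_iff] using hj
    have hpow : x m ^ n = x m ^ (n - j) * x m ^ j := by rw [← pow_add, Nat.sub_add_cancel hj']
    have := hx m
    simp only [T, Polynomial.eval_mul, Polynomial.eval_C, Polynomial.eval_pow,
      Polynomial.eval_add, Polynomial.eval_X, Polynomial.eval_one]
    rw [hpow, div_pow, neg_pow (x m ^ 2 + 1)]
    field_simp
end
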